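/- arXiv:2009.04255 — 3 statements merged into one kernel-verified Lean document; each statement's English description precedes it below -/
import Mathlib

section
/- Suppose the primitive generators n_1,…,n_r of the fan Σ span ℝ^n, and identify X_Σ = U(K_Σ)/G_Σ with quotient map q_Σ. Let m ≥ 1 and, for 1 ≤ k ≤ r, let f_k ∈ ℂ[z_0,…,z_m] be a homogeneous polynomial of degree d*_k such that for every σ ∈ I(K_Σ) the polynomials {f_k : k ∈ σ} have no common real root except the origin of ℝ^{m+1} (so that F = (f_1,…,f_r) maps ℝ^{m+1}∖{0} into U(K_Σ)). Then there exists a (necessarily unique) map f : ℝP^m → X_Σ with f ∘ γ_m = q_Σ ∘ F on ℝ^{m+1}∖{0}, where γ_m : ℝ^{m+1}∖{0} → ℝP^m is the canonical projection, if and only if ∑_{k=1}^r d*_k n_k = 0. -/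
open scoped BigOperators
attribute [local instance] Classical.propDecidable

noncomputable section

namespace Toric


/-! ### Cones and fans -/

/-- The real vector associated to an integer vector. -/
def zr {n : ℕ} (v : Fin n → ℤ) : Fin n → ℝ := fun i => (v i : ℝ)

/-- A convex rational polyhedral cone in `ℝ^n`. -/
def IsRatCone {n : ℕ} (σ : Set (Fin n → ℝ)) : Prop :=
  ∃ s : Finset (Fin n → ℤ),
    σ = {x | ∃ lam : (Fin n → ℤ) → ℝ, (∀ v, 0 ≤ lam v) ∧ x = ∑ v ∈ s, lam v • zr v}

/-- A cone is strongly convex if `σ ∩ (-σ) = {0}`. -/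
def StronglyConvex {n : ℕ} (σ : Set (Fin n → ℝ)) : Prop := σ ∩ (-σ) = {0}

/-- `τ` is a face of `σ`, cut out by a linear form nonnegative on `σ`. -/
def IsFaceOf {n : ℕ} (τ σ : Set (Fin n → ℝ)) : Prop :=
  ∃ L : (Fin n → ℝ) →ₗ[ℝ] ℝ, (∀ x ∈ σ, 0 ≤ L x) ∧ τ = σ ∩ {x | L x = 0}

/-- A fan in `ℝ^n`: a finite collection of strongly convex rational polyhedral cones,
closed under taking faces, such that the intersection of two cones is a face of each;
we also require that it strictly contains `{0}`. -/
structure Fan (n : ℕ) where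
  cones : Set (Set (Fin n → ℝ))
  finite : cones.Finite
  ratCone : ∀ σ ∈ cones, IsRatCone σ
  stronglyConvex : ∀ σ ∈ cones, StronglyConvex σ
  face_mem : ∀ σ ∈ cones, ∀ τ, IsFaceOf τ σ → τ ∈ cones
  inter_face : ∀ σ ∈ cones, ∀ τ ∈ cones, IsFaceOf (σ ∩ τ) σ
  zero_mem : ({0} : Set (Fin n → ℝ)) ∈ cones
  nontrivial : cones ≠ {({0} : Set (Fin n → ℝ))}

/-- A fan is complete if its cones cover `ℝ^n`. -/
def Fan.Complete {n : ℕ} (F : Fan n) : Prop := ⋃₀ F.cones = Set.univ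

/-- A fan is non-singular if each of its cones is spanned by part of a `ℤ`-basis of `ℤ^n`. -/
def Fan.NonSingular {n : ℕ} (F : Fan n) : Prop :=
  ∀ σ ∈ F.cones, ∃ (b : Module.Basis (Fin n) ℤ (Fin n → ℤ)) (s : Finset (Fin n)),
    σ = {x | ∃ lam : Fin n → ℝ, (∀ i, 0 ≤ lam i) ∧ x = ∑ i ∈ s, lam i • zr (b i)}

/-- The ray (one-dimensional cone) generated by a vector. -/
def ray {n : ℕ} (v : Fin n → ℝ) : Set (Fin n → ℝ) := {x | ∃ t : ℝ, 0 ≤ t ∧ x = t • v}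

/-- The cone spanned by the vectors `n_i`, `i ∈ s`. -/
def coneIdx {n r : ℕ} (N : Fin r → Fin n → ℤ) (s : Finset (Fin r)) : Set (Fin n → ℝ) :=
  {x | ∃ lam : Fin r → ℝ, (∀ i, 0 ≤ lam i) ∧ x = ∑ i ∈ s, lam i • zr (N i)}

/-- A point of `ℝ^n` lying in the lattice `ℤ^n`. -/
def IsLatticePoint {n : ℕ} (x : Fin n → ℝ) : Prop := ∀ i, ∃ m : ℤ, x i = (m : ℝ)

/-- `N 1, …, N r` is the (complete, repetition-free) list of primitive generators of the
one-dimensional cones of the fan `F`. -/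
structure IsPrimGens {n r : ℕ} (F : Fan n) (N : Fin r → Fin n → ℤ) : Prop where
  ray_mem : ∀ k, ray (zr (N k)) ∈ F.cones
  ne_zero : ∀ k, N k ≠ 0
  primitive : ∀ k, ray (zr (N k)) ∩ {x | IsLatticePoint x}
      = {x | ∃ c : ℕ, x = (c : ℝ) • zr (N k)}
  inj : Function.Injective N
  complete : ∀ σ ∈ F.cones, Module.finrank ℝ (Submodule.span ℝ σ) = 1 →
      ∃ k, σ = ray (zr (N k))

/-- Condition (2.9.1): a positive integral relation among the primitive generators. -/
def Cond1 {n r : ℕ} (N : Fin r → Fin n → ℤ) : Prop :=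
  ∃ d : Fin r → ℕ, (∀ k, 0 < d k) ∧ ∑ k, (d k : ℤ) • N k = 0

/-- Condition (2.9.2): the primitive generators span `ℤ^n` over `ℤ`. -/
def Cond2 {n r : ℕ} (N : Fin r → Fin n → ℤ) : Prop :=
  Submodule.span ℤ (Set.range N) = ⊤

/-- The underlying simplicial complex `K_Σ` of a fan. -/
def KC {n r : ℕ} (F : Fan n) (N : Fin r → Fin n → ℤ) : Set (Finset (Fin r)) :=
  {s | coneIdx N s ∈ F.cones}

/-- A primitive set: it spans no cone of the fan, but every proper subset does. -/
def PrimitiveSet {r : ℕ} (K : Set (Finset (Fin r))) (s : Finset (Fin r)) : Prop :=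
  s ∉ K ∧ ∀ t ⊂ s, t ∈ K

/-- `r_min`: the minimal cardinality of a primitive set. -/
def rmin {r : ℕ} (K : Set (Finset (Fin r))) : ℕ :=
  sInf {m | ∃ s : Finset (Fin r), PrimitiveSet K s ∧ s.card = m}

/-- `d_min = min {d_1, …, d_r}`. -/
def dmin {r : ℕ} (D : Fin r → ℕ) : ℕ := sInf (Set.range D)

/-- The stability dimension `d(D,Σ) = 2(r_min − 1) d_min − 2`. -/
def dBound {r : ℕ} (K : Set (Finset (Fin r))) (D : Fin r → ℕ) : ℤ :=
  2 * ((rmin K : ℤ) - 1) * (dmin D : ℤ) - 2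

/-- The connectivity bound `C_D(Σ) = 2(r_min − 1) d_min − 1`. -/
def CBound {r : ℕ} (K : Set (Finset (Fin r))) (D : Fin r → ℕ) : ℤ :=
  2 * ((rmin K : ℤ) - 1) * (dmin D : ℤ) - 1

/-! ### Coordinate subspaces, `U(K)`, `G_Σ` and the toric quotient -/

/-- The coordinate subspace `L_σ ⊆ ℂ^r`. -/
def LSub {r : ℕ} (σ : Finset (Fin r)) : Set (Fin r → ℂ) := {x | ∀ i ∈ σ, x i = 0}

/-- The complement `U(K)` of the coordinate subspace arrangement of type `K`. -/
def UK {r : ℕ} (K : Set (Finset (Fin r))) : Set (Fin r → ℂ) :=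
  (⋃ σ ∈ {s : Finset (Fin r) | s ∉ K}, LSub σ)ᶜ

lemma mem_UK {r : ℕ} {K : Set (Finset (Fin r))} {x : Fin r → ℂ} :
    x ∈ UK K ↔ ∀ σ : Finset (Fin r), σ ∉ K → ∃ i ∈ σ, x i ≠ 0 := by
  constructor
  · intro h σ hσ
    by_contra hc
    push_neg at hc
    exact h (Set.mem_biUnion hσ (fun i hi => hc i hi))
  · intro h hx
    rcases Set.mem_iUnion₂.1 hx with ⟨σ, hσ, hxσ⟩
    rcases h σ hσ with ⟨i, hi, hne⟩
    exact hne (hxσ i hi)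

/-- The group `G_Σ` (as a subset of `ℂ^r`). -/
def GSet {n r : ℕ} (N : Fin r → Fin n → ℤ) : Set (Fin r → ℂ) :=
  {μ | (∀ k, μ k ≠ 0) ∧ ∀ m : Fin n → ℤ, ∏ k, μ k ^ (∑ j, N k j * m j) = 1}

/-- The orbit relation of the `G_Σ`-action on `U(K_Σ)`. -/
def toricRel {n r : ℕ} (N : Fin r → Fin n → ℤ) (K : Set (Finset (Fin r)))
    (x y : ↥(UK K)) : Prop :=
  ∃ μ ∈ GSet N, (fun i => μ i * (x : Fin r → ℂ) i) = (y : Fin r → ℂ)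

/-- The toric variety `X_Σ = U(K_Σ)/G_Σ`, as a topological quotient. -/
def XS {n r : ℕ} (N : Fin r → Fin n → ℤ) (K : Set (Finset (Fin r))) : Type :=
  Quot (toricRel N K)

instance {n r : ℕ} (N : Fin r → Fin n → ℤ) (K : Set (Finset (Fin r))) :
    TopologicalSpace (XS N K) :=
  instTopologicalSpaceQuot

/-- The quotient map `q_Σ : U(K_Σ) → X_Σ`. -/
def qmap {n r : ℕ} (N : Fin r → Fin n → ℤ) (K : Set (Finset (Fin r))) :
    ↥(UK K) → XS N K :=
  Quot.mk (toricRel N K)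

/-- `q_Σ` as a continuous map. -/
def qCont {n r : ℕ} (N : Fin r → Fin n → ℤ) (K : Set (Finset (Fin r))) :
    C(↥(UK K), XS N K) :=
  ⟨qmap N K, continuous_quot_mk⟩

lemma coneIdx_empty {n r : ℕ} (N : Fin r → Fin n → ℤ) :
    coneIdx N (∅ : Finset (Fin r)) = ({0} : Set (Fin n → ℝ)) := by
  ext x
  constructor
  · rintro ⟨lam, -, hx⟩
    simpa using hx
  · intro hx
    exact ⟨0, fun i => le_refl 0, by simpa using hx⟩

lemma empty_mem_KC {n r : ℕ} (F : Fan n) (N : Fin r → Fin n → ℤ) :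
    (∅ : Finset (Fin r)) ∈ KC F N := by
  show coneIdx N ∅ ∈ F.cones
  rw [coneIdx_empty]
  exact F.zero_mem

/-- The point `(1,…,1)`. -/
def onesC {r : ℕ} : Fin r → ℂ := fun _ => 1

lemma ones_mem_UK {r : ℕ} {K : Set (Finset (Fin r))} (h : (∅ : Finset (Fin r)) ∈ K) :
    (onesC : Fin r → ℂ) ∈ UK K := by
  rw [mem_UK]
  intro σ hσ
  rcases Finset.nonempty_iff_ne_empty.2 (fun he : σ = ∅ => hσ (by rw [he]; exact h)) with ⟨i, hi⟩
  exact ⟨i, hi, one_ne_zero⟩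

/-- The base point `(1,…,1)` of `U(K_Σ)`. -/
def onesUK {r : ℕ} {K : Set (Finset (Fin r))} (h : (∅ : Finset (Fin r)) ∈ K) : ↥(UK K) :=
  ⟨onesC, ones_mem_UK h⟩

/-- The base point `[1,…,1]` of `X_Σ`. -/
def baseX {n r : ℕ} (N : Fin r → Fin n → ℤ) (K : Set (Finset (Fin r)))
    (h : (∅ : Finset (Fin r)) ∈ K) : XS N K :=
  qmap N K (onesUK h)


lemma eval_scale {ι : Type*} (p : MvPolynomial ι ℂ) (d : ℕ) (hp : p.IsHomogeneous d)
    (c : ℂ) (x : ι → ℂ) :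
    MvPolynomial.eval (fun i => c * x i) p = c ^ d * MvPolynomial.eval x p := by
  rw [MvPolynomial.eval_eq, MvPolynomial.eval_eq, Finset.mul_sum]
  refine Finset.sum_congr rfl fun e he => ?_
  have h := hp (MvPolynomial.mem_support_iff.1 he)
  have h2 : ∑ i ∈ e.support, e i = d := by
    rw [← h, Finsupp.weight_apply, Finsupp.sum]
    simp
  simp only [mul_pow, Finset.prod_mul_distrib]
  rw [Finset.prod_pow_eq_pow_sum, h2]
  ring

lemma exists_real_ne_zero {ι : Type*} (p : MvPolynomial ι ℂ) (hp : p ≠ 0) :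
    ∃ x : ι → ℝ, MvPolynomial.eval (fun i => ((x i : ℝ) : ℂ)) p ≠ 0 := by
  by_contra hc
  push Not at hc
  apply hp
  refine MvPolynomial.funext_set (fun _ => Set.range ((↑) : ℝ → ℂ))
    (fun _ => Set.infinite_range_of_injective Complex.ofReal_injective) ?_
  intro x hx
  choose y hy using fun i => hx i (Set.mem_univ i)
  have : x = fun i => ((y i : ℝ) : ℂ) := funext fun i => (hy i).symm
  rw [this, hc y, map_zero]

lemma toricRel_equivalence {n r : ℕ} (N : Fin r → Fin n → ℤ) (K : Set (Finset (Fin r))) :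
    Equivalence (toricRel N K) where
  refl x := ⟨fun _ => 1, ⟨fun _ => one_ne_zero, fun m => by simp⟩, by simp⟩
  symm := by
    rintro x y ⟨μ, ⟨h0, h1⟩, h⟩
    refine ⟨fun k => (μ k)⁻¹, ⟨fun k => inv_ne_zero (h0 k), fun m => ?_⟩, ?_⟩
    · simp only [inv_zpow]
      rw [Finset.prod_inv_distrib, h1 m, inv_one]
    · rw [← h]
      funext i
      simp [h0 i]
  trans := by
    rintro x y z ⟨μ, ⟨h0, h1⟩, h⟩ ⟨ν, ⟨k0, k1⟩, k⟩
    refine ⟨fun k => ν k * μ k, ⟨fun k => mul_ne_zero (k0 k) (h0 k), fun m => ?_⟩, ?_⟩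
    · simp only [mul_zpow]
      rw [Finset.prod_mul_distrib, h1 m, k1 m, one_mul]
    · rw [← k, ← h]
      funext i
      simp [mul_assoc]

lemma prod_pow_eq {n r : ℕ} (N : Fin r → Fin n → ℤ) (d : Fin r → ℕ) (c : ℂ) (hc : c ≠ 0)
    (m : Fin n → ℤ) :
    ∏ k, (c ^ d k) ^ (∑ j, N k j * m j) = c ^ (∑ j, (∑ k, (d k : ℤ) • N k) j * m j) := by
  have h1 : ∑ j, (∑ k, (d k : ℤ) • N k) j * m j = ∑ k, (d k : ℤ) * ∑ j, N k j * m j := by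
    simp only [Finset.sum_apply, Pi.smul_apply, smul_eq_mul, Finset.sum_mul, Finset.mul_sum]
    rw [Finset.sum_comm]
    simp only [mul_assoc]
  rw [h1]
  have h2 : ∀ (s : Finset (Fin r)) (e : Fin r → ℤ), c ^ (∑ k ∈ s, e k) = ∏ k ∈ s, c ^ e k := by
    intro s e
    induction s using Finset.induction_on with
    | empty => simp
    | insert a s ha ih => rw [Finset.sum_insert ha, Finset.prod_insert ha, zpow_add₀ hc, ih]
  rw [h2]
  refine Finset.prod_congr rfl fun k _ => ?_
  rw [zpow_mul, zpow_natCast]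

/-- **Cox's lemma.** Given homogeneous polynomials `f_1,…,f_r` on
`ℝ^{m+1}` (with complex coefficients) of degrees `d*_1,…,d*_r`, with no common real
root except the origin over any `σ ∉ K_Σ`, there exists a (necessarily unique) map
`f : ℝP^m → X_Σ` with `f ∘ γ_m = q_Σ ∘ F` if and only if `∑ d*_k n_k = 0`. -/
theorem algebraic_map_exists_iff
    {n r : ℕ} (F : Fan n) (N : Fin r → Fin n → ℤ) (hPG : IsPrimGens F N)
    (hspanR : Submodule.span ℝ (Set.range fun k => zr (N k)) = ⊤)
    (m : ℕ) (hm : 1 ≤ m) (dstar : Fin r → ℕ)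
    (f : Fin r → MvPolynomial (Fin (m + 1)) ℂ)
    (hf0 : ∀ k, f k ≠ 0)
    (hhom : ∀ k, (f k).IsHomogeneous (dstar k))
    (hroot : ∀ σ : Finset (Fin r), σ ∉ KC F N →
      ∀ x : Fin (m + 1) → ℝ, x ≠ 0 →
        ∃ k ∈ σ, MvPolynomial.eval (fun i => ((x i : ℝ) : ℂ)) (f k) ≠ 0) :
    (∃! g : Projectivization ℝ (Fin (m + 1) → ℝ) → XS N (KC F N),
        ∀ (x : Fin (m + 1) → ℝ) (hx : x ≠ 0)
          (hmem : (fun k => MvPolynomial.eval (fun i => ((x i : ℝ) : ℂ)) (f k))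
              ∈ UK (KC F N)),
          g (Projectivization.mk ℝ x hx) = qmap N (KC F N) ⟨_, hmem⟩) ↔
      ∑ k, (dstar k : ℤ) • N k = 0 := by
  have hU : ∀ x : Fin (m + 1) → ℝ, x ≠ 0 →
      (fun k => MvPolynomial.eval (fun i => ((x i : ℝ) : ℂ)) (f k)) ∈ UK (KC F N) :=
    fun x hx => mem_UK.2 fun σ hσ => hroot σ hσ x hx
  have hscale : ∀ (c : ℝ) (x : Fin (m + 1) → ℝ) (k : Fin r),
      MvPolynomial.eval (fun i => (((c • x) i : ℝ) : ℂ)) (f k) =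
        (c : ℂ) ^ dstar k * MvPolynomial.eval (fun i => ((x i : ℝ) : ℂ)) (f k) := by
    intro c x k
    rw [← eval_scale (f k) (dstar k) (hhom k)]
    simp
  constructor
  · rintro ⟨g, hg, -⟩
    obtain ⟨x, hx⟩ := exists_real_ne_zero ((∏ k, f k) * MvPolynomial.X 0)
      (mul_ne_zero (Finset.prod_ne_zero_iff.2 fun k _ => hf0 k) (MvPolynomial.X_ne_zero 0))
    rw [map_mul, map_prod, MvPolynomial.eval_X] at hx
    have hxk : ∀ k, MvPolynomial.eval (fun i => ((x i : ℝ) : ℂ)) (f k) ≠ 0 := fun k =>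
      Finset.prod_ne_zero_iff.1 (left_ne_zero_of_mul hx) k (Finset.mem_univ k)
    have hx0 : x ≠ 0 := by
      rintro rfl
      exact right_ne_zero_of_mul hx (by simp)
    have h2x : (2 : ℝ) • x ≠ 0 := smul_ne_zero two_ne_zero hx0
    have hmk : Projectivization.mk ℝ ((2 : ℝ) • x) h2x = Projectivization.mk ℝ x hx0 :=
      (Projectivization.mk_eq_mk_iff' ℝ _ _ _ _).2 ⟨2, rfl⟩
    have hq := (hg x hx0 (hU x hx0)).symm.trans
      ((congrArg g hmk.symm).trans (hg _ h2x (hU _ h2x)))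
    obtain ⟨μ, ⟨-, hμ1⟩, hμ⟩ := (toricRel_equivalence N (KC F N)).quot_mk_eq_iff _ _ |>.1 hq
    have hμk : ∀ k, μ k = (2 : ℂ) ^ dstar k := by
      intro k
      have h := congrFun hμ k
      simp only [hscale] at h
      simpa using mul_right_cancel₀ (hxk k) h
    funext j
    have h := hμ1 (Pi.single j 1)
    simp only [hμk] at h
    rw [prod_pow_eq N dstar 2 two_ne_zero] at h
    simp only [Pi.single_apply, mul_ite, mul_one, mul_zero, Finset.sum_ite_eq',
      Finset.mem_univ, if_true] at h
    have h' : (2 : ℝ) ^ ((∑ k, (dstar k : ℤ) • N k) j) = 1 := by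
      have := congrArg norm h
      rwa [norm_zpow, norm_one, Complex.norm_ofNat] at this
    rw [zpow_eq_one_iff_right₀ (by norm_num) (by norm_num)] at h'
    exact h'
  · intro hsum
    refine ⟨fun p => qmap N (KC F N) ⟨_, hU p.rep p.rep_nonzero⟩, ?_, ?_⟩
    · intro x hx hmem
      obtain ⟨a, ha⟩ := Projectivization.exists_smul_eq_mk_rep ℝ x hx
      symm
      refine Quot.sound ⟨fun k => ((a : ℝ) : ℂ) ^ dstar k, ⟨fun k => ?_, fun v => ?_⟩, ?_⟩
      · exact pow_ne_zero _ (Complex.ofReal_ne_zero.2 a.ne_zero)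
      · rw [prod_pow_eq N dstar _ (Complex.ofReal_ne_zero.2 a.ne_zero), hsum]
        simp
      · funext k
        have h := hscale (a : ℝ) x k
        rw [← h]
        show _ = MvPolynomial.eval (fun i => (((Projectivization.mk ℝ x hx).rep i : ℝ) : ℂ)) (f k)
        rw [← ha]
        rfl
    · intro g hg
      funext p
      have h := hg p.rep p.rep_nonzero (hU p.rep p.rep_nonzero)
      rw [Projectivization.mk_rep] at h
      exact h

end Toric
end
end

section
/- Let Σ be a non-singular fan in ℝ^n whose primitive generators n_1,…,n_r span ℤ^n over ℤ (condition (2.9.2)). Then G_Σ is isomorphic as a topological group to (ℂ*)^{r−n}, and the coordinatewise action of G_Σ on U(K_Σ) is free (i.e. if μ ∈ G_Σ and x ∈ U(K_Σ) satisfy μ·x = x, then μ = (1,…,1)). -/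
open scoped BigOperators
attribute [local instance] Classical.propDecidable

noncomputable section

namespace Toric


/-- `G_Σ` as a subgroup of the torus `(ℂ*)^r`. -/
def GSub {n r : ℕ} (N : Fin r → Fin n → ℤ) : Subgroup (Fin r → ℂˣ) where
  carrier := {μ | ∀ m : Fin n → ℤ, ∏ k, ((μ k : ℂ)) ^ (∑ j, N k j * m j) = 1}
  one_mem' := by intro m; simp
  mul_mem' := by
    intro a b ha hb m
    simp only [Pi.mul_apply, Units.val_mul, mul_zpow, Finset.prod_mul_distrib,
      ha m, hb m, one_mul]
  inv_mem' := by
    intro a ha m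
    simp only [Pi.inv_apply, Units.val_inv_eq_inv_val, inv_zpow]
    rw [Finset.prod_inv_distrib, ha m, inv_one]

/-- The monomial map of tori attached to an integer matrix. -/
def tmap {p q : ℕ} (M : Matrix (Fin p) (Fin q) ℤ) : (Fin q → ℂˣ) →* (Fin p → ℂˣ) where
  toFun μ := fun i => ∏ k, μ k ^ M i k
  map_one' := by ext i; simp
  map_mul' := by
    intro a b
    funext i
    simp only [Pi.mul_apply, mul_zpow, Finset.prod_mul_distrib]

lemma tmap_apply {p q : ℕ} (M : Matrix (Fin p) (Fin q) ℤ) (μ : Fin q → ℂˣ) (i : Fin p) :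
    tmap M μ i = ∏ k, μ k ^ M i k := rfl

lemma tmap_continuous {p q : ℕ} (M : Matrix (Fin p) (Fin q) ℤ) : Continuous (tmap M) := by
  refine continuous_pi fun i => ?_
  simp only [tmap_apply]
  exact continuous_finsetProd _ fun k _ => (continuous_apply k).zpow _

lemma zpow_sum_units {ι : Type*} (s : Finset ι) (a : ℂˣ) (f : ι → ℤ) :
    a ^ (∑ i ∈ s, f i) = ∏ i ∈ s, a ^ f i := by
  induction s using Finset.induction_on with
  | empty => simp
  | insert i s hi ih => rw [Finset.sum_insert hi, Finset.prod_insert hi, zpow_add, ih]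

lemma tmap_tmap {p q l : ℕ} (M : Matrix (Fin p) (Fin q) ℤ) (L : Matrix (Fin l) (Fin p) ℤ)
    (μ : Fin q → ℂˣ) : tmap L (tmap M μ) = tmap (L * M) μ := by
  funext i
  simp only [tmap_apply, Matrix.mul_apply, zpow_sum_units, ← Finset.prod_zpow]
  rw [Finset.prod_comm]
  refine Finset.prod_congr rfl fun k _ => Finset.prod_congr rfl fun j _ => ?_
  rw [← zpow_mul, mul_comm]

lemma tmap_one {p : ℕ} (μ : Fin p → ℂˣ) : tmap 1 μ = μ := by
  funext i
  rw [tmap_apply, Finset.prod_eq_single i]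
  · simp
  · intro k _ hk
    simp [Matrix.one_apply_ne hk.symm]
  · simp

lemma tmap_zero {p q : ℕ} (μ : Fin q → ℂˣ) : tmap (0 : Matrix (Fin p) (Fin q) ℤ) μ = 1 := by
  funext i
  simp [tmap_apply]

lemma tmap_add {p q : ℕ} (A B : Matrix (Fin p) (Fin q) ℤ) (μ : Fin q → ℂˣ) :
    tmap (A + B) μ = tmap A μ * tmap B μ := by
  funext i
  simp [tmap_apply, zpow_add, Finset.prod_mul_distrib]

lemma mem_GSub_iff {n r : ℕ} (N : Fin r → Fin n → ℤ) (μ : Fin r → ℂˣ) :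
    μ ∈ GSub N ↔ tmap (Matrix.of N).transpose μ = 1 := by
  have key : μ ∈ GSub N ↔ ∀ m : Fin n → ℤ, ∏ k, (μ k) ^ (∑ j, N k j * m j) = 1 := by
    refine forall_congr' fun m => ?_
    rw [Units.ext_iff]
    simp
  rw [key]
  constructor
  · intro h
    funext j
    have := h (Pi.single j 1)
    simpa [tmap_apply, Pi.single_apply] using this
  · intro h m
    have h' : ∀ j, ∏ k, μ k ^ N k j = 1 := fun j => congrFun h j
    simp only [zpow_sum_units, zpow_mul]
    rw [Finset.prod_comm]
    simp only [Finset.prod_zpow, h', one_zpow, Finset.prod_const_one]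

lemma exists_matrices {n r : ℕ} (N : Fin r → Fin n → ℤ) (h2 : Cond2 N) :
    ∃ (B : Matrix (Fin (r - n)) (Fin r) ℤ) (C : Matrix (Fin r) (Fin (r - n)) ℤ)
      (D : Matrix (Fin r) (Fin n) ℤ), B * C = 1 ∧ (Matrix.of N).transpose * C = 0 ∧
      C * B + D * (Matrix.of N).transpose = 1 := by
  set φ : (Fin r → ℤ) →ₗ[ℤ] (Fin n → ℤ) := (Matrix.of N).transpose.mulVecLin with hφ
  have hsurj : Function.Surjective φ := by
    rw [← LinearMap.range_eq_top, hφ, Matrix.range_mulVecLin]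
    exact h2
  obtain ⟨s, hs⟩ := Module.projective_lifting_property φ LinearMap.id hsurj
  have hs' : ∀ x, φ (s x) = x := fun x => LinearMap.congr_fun hs x
  have hrank : Module.finrank ℤ (LinearMap.ker φ) = r - n := by
    have h := Submodule.finrank_quotient_add_finrank (LinearMap.ker φ)
    rw [(φ.quotKerEquivOfSurjective hsurj).finrank_eq] at h
    simp only [Module.finrank_fintype_fun_eq_card, Fintype.card_fin] at h
    omega
  let b := Module.finBasisOfFinrankEq ℤ (LinearMap.ker φ) hrank
  let π : (Fin r → ℤ) →ₗ[ℤ] LinearMap.ker φ :=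
    LinearMap.codRestrict (LinearMap.ker φ) (LinearMap.id - s ∘ₗ φ) (by
      intro x; simp [hs'])
  let β : (Fin r → ℤ) →ₗ[ℤ] (Fin (r - n) → ℤ) := b.equivFun.toLinearMap ∘ₗ π
  let γ : (Fin (r - n) → ℤ) →ₗ[ℤ] (Fin r → ℤ) :=
    (LinearMap.ker φ).subtype ∘ₗ b.equivFun.symm.toLinearMap
  have hN : LinearMap.toMatrix' φ = (Matrix.of N).transpose := by
    rw [hφ, ← Matrix.toLin'_apply', LinearMap.toMatrix'_toLin']
  refine ⟨LinearMap.toMatrix' β, LinearMap.toMatrix' γ, LinearMap.toMatrix' s, ?_, ?_, ?_⟩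
  · rw [← LinearMap.toMatrix'_comp, ← LinearMap.toMatrix'_id]
    congr 1
    refine LinearMap.ext fun x => ?_
    have : π (γ x) = b.equivFun.symm x := by
      apply Subtype.ext
      have h0 : φ (γ x) = 0 := (b.equivFun.symm x).2
      change γ x - s (φ (γ x)) = _
      rw [h0, map_zero, sub_zero]
      rfl
    change b.equivFun (π (γ x)) = x
    rw [this, LinearEquiv.apply_symm_apply]
  · rw [← hN, ← LinearMap.toMatrix'_comp, ← map_zero LinearMap.toMatrix']
    congr 1
    refine LinearMap.ext fun x => ?_
    exact (b.equivFun.symm x).2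
  · rw [← hN, ← LinearMap.toMatrix'_comp, ← LinearMap.toMatrix'_comp, ← map_add,
      ← LinearMap.toMatrix'_id]
    congr 1
    refine LinearMap.ext fun x => ?_
    change ((b.equivFun.symm (b.equivFun (π x)) : LinearMap.ker φ) : Fin r → ℤ) + s (φ x) = x
    rw [LinearEquiv.symm_apply_apply]
    change x - s (φ x) + s (φ x) = x
    simp

lemma GSub_iso {n r : ℕ} (N : Fin r → Fin n → ℤ) (h2 : Cond2 N) :
    ∃ e : ↥(GSub N) ≃* (Fin (r - n) → ℂˣ), Continuous ⇑e ∧ Continuous ⇑e.symm := by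
  obtain ⟨B, C, D, hBC, hNC, hCB⟩ := exists_matrices N h2
  have hmem : ∀ ν, tmap C ν ∈ GSub N := by
    intro ν
    rw [mem_GSub_iff, tmap_tmap, hNC, tmap_zero]
  let e : ↥(GSub N) ≃* (Fin (r - n) → ℂˣ) :=
    { toFun := fun μ => tmap B μ
      invFun := fun ν => ⟨tmap C ν, hmem ν⟩
      left_inv := by
        intro μ
        apply Subtype.ext
        change tmap C (tmap B (μ : Fin r → ℂˣ)) = μ
        have h1 := tmap_one (μ : Fin r → ℂˣ)
        rw [← hCB, tmap_add, ← tmap_tmap, ← tmap_tmap, (mem_GSub_iff N _).1 μ.2, map_one,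
          mul_one] at h1
        exact h1
      right_inv := by
        intro ν
        change tmap B (tmap C ν) = ν
        rw [tmap_tmap, hBC, tmap_one]
      map_mul' := by
        intro a b
        exact map_mul (tmap B) _ _ }
  exact ⟨e, (tmap_continuous B).comp continuous_subtype_val,
    Continuous.subtype_mk (tmap_continuous C) hmem⟩

lemma zr_inj {n : ℕ} {v w : Fin n → ℤ} (h : zr v = zr w) : v = w := by
  funext i
  have := congrFun h i
  simpa [zr] using this

lemma gens_in_basis {n r : ℕ} (F : Fan n) (N : Fin r → Fin n → ℤ)
    (hPG : IsPrimGens F N) (s : Finset (Fin r)) (hs : coneIdx N s ∈ F.cones)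
    (b : Module.Basis (Fin n) ℤ (Fin n → ℤ)) (t : Finset (Fin n))
    (hb : coneIdx N s = {x | ∃ lam : Fin n → ℝ, (∀ i, 0 ≤ lam i) ∧
      x = ∑ i ∈ t, lam i • zr (b i)}) (k : Fin r) (hk : k ∈ s) : ∃ i, N k = b i := by
  have hkσ : zr (N k) ∈ coneIdx N s := by
    refine ⟨Pi.single k 1, fun i => ?_, ?_⟩
    · by_cases h : i = k
      · subst h; simp
      · simp [h]
    · rw [Finset.sum_eq_single k]
      · simp
      · intro j _ hj; simp [hj]
      · intro h; exact absurd hk h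
  have hbσ : ∀ i ∈ t, zr (b i) ∈ coneIdx N s := by
    intro k hk
    rw [hb]
    refine ⟨Pi.single k 1, fun i => ?_, ?_⟩
    · by_cases h : i = k
      · subst h; simp
      · simp [h]
    · rw [Finset.sum_eq_single k]
      · simp
      · intro j _ hj; simp [hj]
      · intro h; exact absurd hk h
  have hraysub : coneIdx N s ∩ ray (zr (N k)) = ray (zr (N k)) := by
    refine Set.inter_eq_right.2 ?_
    rintro x ⟨c, hc, rfl⟩
    obtain ⟨lam, hl, hx⟩ := hkσ
    exact ⟨fun i => c * lam i, fun i => mul_nonneg hc (hl i), by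
      rw [hx, Finset.smul_sum]; simp [mul_smul]⟩
  obtain ⟨L, hL, hface⟩ := F.inter_face _ hs _ (hPG.ray_mem k)
  rw [hraysub] at hface
  have hkray : zr (N k) ∈ ray (zr (N k)) := ⟨1, zero_le_one, by simp⟩
  have hLk : L (zr (N k)) = 0 := by
    rw [hface] at hkray
    exact hkray.2
  have hkσ2 := hkσ
  rw [hb] at hkσ2
  obtain ⟨lam, hl, hx⟩ := hkσ2
  have hsum : ∑ i ∈ t, lam i * L (zr (b i)) = 0 := by
    rw [hx, map_sum] at hLk
    simpa using hLk
  have hterm := (Finset.sum_eq_zero_iff_of_nonneg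
    (fun i hi => mul_nonneg (hl i) (hL _ (hbσ i hi)))).1 hsum
  have hex : ∃ i ∈ t, lam i ≠ 0 := by
    by_contra hc
    push Not at hc
    apply hPG.ne_zero k
    apply zr_inj
    rw [hx, Finset.sum_eq_zero (fun i hi => by rw [hc i hi, zero_smul])]
    funext i
    simp [zr]
  obtain ⟨i, hi, hli⟩ := hex
  have hLi : L (zr (b i)) = 0 := (mul_eq_zero.1 (hterm i hi)).resolve_left hli
  have hbray : zr (b i) ∈ ray (zr (N k)) := by
    rw [hface]
    exact ⟨hbσ i hi, hLi⟩
  have hprim : zr (b i) ∈ ray (zr (N k)) ∩ {x | IsLatticePoint x} :=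
    ⟨hbray, fun j => ⟨b i j, rfl⟩⟩
  rw [hPG.primitive k] at hprim
  obtain ⟨c, hc⟩ := hprim
  have hc' : b i = (c : ℤ) • N k := by
    apply zr_inj
    rw [hc]
    funext j
    simp [zr]
  have h1 : (c : ℤ) * b.repr (N k) i = 1 := by
    have h3 : b.repr (b i) i = b.repr ((c : ℤ) • N k) i := by rw [← hc']
    rw [map_smul, Module.Basis.repr_self, Finsupp.single_eq_same, Finsupp.smul_apply,
      smul_eq_mul] at h3
    exact h3.symm
  have hc1 : c = 1 := by
    have : IsUnit (c : ℤ) := IsUnit.of_mul_eq_one _ h1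
    simpa using Int.ofNat_isUnit.1 this
  refine ⟨i, ?_⟩
  rw [hc', hc1]
  simp

lemma free_action {n r : ℕ} (F : Fan n) (N : Fin r → Fin n → ℤ)
    (hPG : IsPrimGens F N) (hNS : F.NonSingular) (μ : Fin r → ℂ) (hμ : μ ∈ GSet N)
    (x : Fin r → ℂ) (hx : x ∈ UK (KC F N)) (hfix : (fun i => μ i * x i) = x) :
    μ = (onesC : Fin r → ℂ) := by
  have hne : ∀ i, x i ≠ 0 → μ i = 1 := fun i hi =>
    mul_right_cancel₀ hi (by rw [one_mul]; exact congrFun hfix i)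
  funext k
  change μ k = 1
  by_cases hk : x k = 0
  swap
  · exact hne k hk
  let s : Finset (Fin r) := Finset.univ.filter fun i => x i = 0
  have hs : coneIdx N s ∈ F.cones := by
    by_contra hc
    obtain ⟨i, hi, hxi⟩ := mem_UK.1 hx s hc
    exact hxi (Finset.mem_filter.1 hi).2
  obtain ⟨b, t, hb⟩ := hNS _ hs
  have hg := gens_in_basis F N hPG s hs b t hb
  obtain ⟨i, hi⟩ := hg k (by simp [s, hk])
  have hdot : ∀ l, ∑ j, N l j * b.coord i (Pi.single j 1) = b.coord i (N l) := by
    intro l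
    conv_rhs => rw [pi_eq_sum_univ' (N l)]
    rw [map_sum]
    refine Finset.sum_congr rfl fun j _ => ?_
    rw [map_smul, smul_eq_mul]
  have h := hμ.2 (fun j => b.coord i (Pi.single j 1))
  simp only [hdot] at h
  rw [Finset.prod_eq_single k] at h
  · rw [hi] at h
    simpa using h
  · intro l _ hl
    by_cases hxl : x l = 0
    · obtain ⟨i', hi'⟩ := hg l (by simp [s, hxl])
      have hii : i' ≠ i := by
        rintro rfl
        exact hl (hPG.inj (hi'.trans hi.symm))
      rw [hi']
      simp [hii]
    · rw [hne l hxl, one_zpow]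
  · simp

/-- If the primitive generators of the non-singular fan `Σ` span `ℤ^n`
over `ℤ`, then `G_Σ` is isomorphic, as a topological group, to `(ℂ*)^{r−n}`, and its
coordinatewise action on `U(K_Σ)` is free. -/
theorem GSigma_iso_and_free_action
    {n r : ℕ} (F : Fan n) (N : Fin r → Fin n → ℤ)
    (hPG : IsPrimGens F N) (hNS : F.NonSingular) (h2 : Cond2 N) :
    (∃ e : ↥(GSub N) ≃* (Fin (r - n) → ℂˣ), Continuous ⇑e ∧ Continuous ⇑e.symm) ∧
    (∀ μ ∈ GSet N, ∀ x ∈ UK (KC F N),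
      (fun i => μ i * x i) = x → μ = (onesC : Fin r → ℂ)) := by
  exact ⟨GSub_iso N h2, fun μ hμ x hx hfix => free_action F N hPG hNS μ hμ x hx hfix⟩

end Toric
end
end

section
/- Let K be an abstract simplicial complex on the vertex set [r] = {1,…,r} (a collection of subsets of [r] closed under taking subsets and containing ∅) that contains every singleton {i}. Let Z_K = {x ∈ ℂ^r : |x_i| ≤ 1 for all i, and {i : |x_i| < 1} ∈ K} (the moment-angle complex Z_K(D²,S¹)) and U(K) = ℂ^r ∖ ⋃_{σ∉K} L_σ, where L_σ = {x ∈ ℂ^r : x_i = 0 for all i ∈ σ}. Then: (i) Z_K is 2-connected (path-connected with π_1(Z_K) = π_2(Z_K) = 0); and (ii) Z_K ⊆ U(K) and there is a deformation retraction r_ℂ : U(K) → Z_K that is equivariant with respect to the coordinatewise action of the torus 𝕋^r = (S¹)^r on ℂ^r. -/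
open scoped BigOperators
attribute [local instance] Classical.propDecidable

noncomputable section

namespace Toric


/-- The moment-angle complex `Z_K = Z_K(D², S¹) ⊆ ℂ^r`. -/
def ZK {r : ℕ} (K : Set (Finset (Fin r))) : Set (Fin r → ℂ) :=
  {x | (∀ i, ‖x i‖ ≤ 1) ∧
    (Finset.univ.filter fun i => ‖x i‖ < 1) ∈ K}

/-! ### Auxiliary material -/

lemma card_two {r : ℕ} {K : Set (Finset (Fin r))} (hE : (∅ : Finset (Fin r)) ∈ K)
    (hsingle : ∀ i : Fin r, ({i} : Finset (Fin r)) ∈ K) {τ : Finset (Fin r)} (h : τ ∉ K) :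
    ∃ i ∈ τ, ∃ j ∈ τ, i ≠ j := by
  have : 1 < τ.card := by
    by_contra hc
    have h1 : τ.card ≤ 1 := by omega
    rcases Nat.le_one_iff_eq_zero_or_eq_one.1 h1 with h0 | h0
    · exact h (Finset.card_eq_zero.1 h0 ▸ hE)
    · obtain ⟨x, hx⟩ := Finset.card_eq_one.1 h0
      exact h (hx ▸ hsingle x)
  exact Finset.one_lt_card.1 this

/-- General position. -/
lemma exists_avoid {r : ℕ} {K : Set (Finset (Fin r))} (hE : (∅ : Finset (Fin r)) ∈ K)
    (hsingle : ∀ i : Fin r, ({i} : Finset (Fin r)) ∈ K)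
    {E : Type*} [NormedAddCommGroup E] [NormedSpace ℝ E] [FiniteDimensional ℝ E]
    (hdim : Module.finrank ℝ E ≤ 3) {D : Set E} (hD : Convex ℝ D)
    (A : E → Fin r → ℂ) (hA : ContDiffOn ℝ 1 A D)
    (w : E → ℝ) (hw : ContDiffOn ℝ 1 w D) (hw0 : ∀ e ∈ D, w e ≠ 0) :
    ∃ p : Fin r → ℂ, ∀ e ∈ D, A e + w e • p ∈ UK K := by
  let B : Fin r × Fin r → Set (Fin r → ℂ) := fun q =>
    {p | q.1 ≠ q.2 ∧ ∃ e ∈ D, (A e + w e • p) q.1 = 0 ∧ (A e + w e • p) q.2 = 0}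
  have hB : ∀ q, dimH (B q) < Module.finrank ℝ (Fin r → ℂ) := by
    rintro ⟨i, j⟩
    by_cases hij : i = j
    · have : B (i, j) = ∅ := by
        ext p; simp [B, hij]
      rw [this, dimH_empty]
      have : Nonempty (Fin r) := ⟨i⟩
      exact_mod_cast Module.finrank_pos
    let V := {k : Fin r // k ≠ i ∧ k ≠ j} → ℂ
    let Φ : V × E → (Fin r → ℂ) := fun x k =>
      if h : k ≠ i ∧ k ≠ j then x.1 ⟨k, h⟩ else (-(w x.2)⁻¹) • A x.2 k
    have hmaps : Set.MapsTo (Prod.snd : V × E → E) (Set.univ ×ˢ D) D := fun x hx => hx.2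
    have hΦ : ContDiffOn ℝ 1 Φ (Set.univ ×ˢ D) := by
      rw [contDiffOn_pi]
      intro k
      by_cases h : k ≠ i ∧ k ≠ j
      · simp only [Φ, h, dif_pos, ne_eq, not_false_eq_true, and_self]
        exact (((contDiff_apply ℝ ℂ (⟨k, h⟩ : {k : Fin r // k ≠ i ∧ k ≠ j})).comp
          contDiff_fst)).contDiffOn
      · simp only [Φ, h, dif_neg, not_false_eq_true]
        have h1 : ContDiffOn ℝ 1 (fun x : V × E => w x.2) (Set.univ ×ˢ D) :=
          hw.comp contDiff_snd.contDiffOn hmaps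
        have h2 : ContDiffOn ℝ 1 (fun x : V × E => A x.2 k) (Set.univ ×ˢ D) :=
          ((contDiffOn_pi.1 hA) k).comp contDiff_snd.contDiffOn hmaps
        exact ((h1.inv fun x hx => hw0 _ hx.2).neg).smul h2
    have hsub : B (i, j) ⊆ Φ '' (Set.univ ×ˢ D) := by
      rintro p ⟨-, e, he, h1, h2⟩
      refine ⟨(fun k => p k.1, e), ⟨trivial, he⟩, ?_⟩
      have hw' := hw0 e he
      have key : ∀ k, (A e + w e • p) k = 0 → (-(w e)⁻¹) • A e k = p k := by
        intro k hk
        have : A e k = -(w e • p k) := eq_neg_of_add_eq_zero_left hk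
        rw [this, smul_neg, neg_smul, neg_neg, smul_smul, inv_mul_cancel₀ hw', one_smul]
      funext k
      by_cases h : k ≠ i ∧ k ≠ j
      · simp only [Φ, h, dif_pos, ne_eq, not_false_eq_true, and_self]
      · simp only [Φ, h, dif_neg, not_false_eq_true]
        rcases not_and_or.1 h with h | h
        · rw [not_not.1 h]; exact key _ h1
        · rw [not_not.1 h]; exact key _ h2
    have hcard : Fintype.card {k : Fin r // k ≠ i ∧ k ≠ j} + 2 = r := by
      rw [Fintype.card_subtype]
      have : (Finset.univ.filter fun k : Fin r => k ≠ i ∧ k ≠ j) = ({i, j} : Finset (Fin r))ᶜ := by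
        ext k; simp
      have h2 : ({i, j} : Finset (Fin r)).card = 2 := Finset.card_pair hij
      have h3 := Finset.card_add_card_compl ({i, j} : Finset (Fin r))
      rw [this]
      simp only [Fintype.card_fin] at h3
      omega
    have hfr : ∀ (ι : Type) [Fintype ι], Module.finrank ℝ (ι → ℂ) = 2 * Fintype.card ι := by
      intro ι _
      rw [Module.finrank_pi_fintype]
      simp [Complex.finrank_real_complex, mul_comm]
    have hlt : Module.finrank ℝ (V × E) < Module.finrank ℝ (Fin r → ℂ) := by
      rw [Module.finrank_prod, hfr, hfr, Fintype.card_fin]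
      omega
    calc dimH (B (i, j)) ≤ dimH (Φ '' (Set.univ ×ˢ D)) := dimH_mono hsub
      _ ≤ dimH ((Set.univ : Set V) ×ˢ D) :=
        hΦ.dimH_image_le (convex_univ.prod hD) subset_rfl
      _ ≤ dimH (Set.univ : Set (V × E)) := dimH_mono (Set.subset_univ _)
      _ = Module.finrank ℝ (V × E) := Real.dimH_univ_eq_finrank _
      _ < _ := by exact_mod_cast hlt
  by_cases hr : r = 0
  · refine ⟨0, fun e he => ?_⟩
    rw [mem_UK]
    intro τ hτ
    obtain ⟨i, -⟩ := card_two hE hsingle hτ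
    subst hr
    exact i.elim0
  have hU : dimH (⋃ q, B q) < Module.finrank ℝ (Fin r → ℂ) := by
    have : Nonempty (Fin r) := ⟨⟨0, Nat.pos_of_ne_zero hr⟩⟩
    rw [dimH_iUnion, ← Finset.sup_univ_eq_iSup, Finset.sup_lt_iff]
    · exact fun q _ => hB q
    · have : 0 < Module.finrank ℝ (Fin r → ℂ) := Module.finrank_pos
      rw [bot_eq_zero]
      exact_mod_cast this
  obtain ⟨p, hp⟩ := (dense_compl_of_dimH_lt_finrank hU).nonempty
  refine ⟨p, fun e he => ?_⟩
  rw [mem_UK]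
  intro τ hτ
  obtain ⟨i, hi, j, hj, hij⟩ := card_two hE hsingle hτ
  by_contra hc
  push Not at hc
  exact hp (Set.mem_iUnion.2 ⟨(i, j), hij, e, he, hc i hi, hc j hj⟩)

lemma isOpen_UK {r : ℕ} (K : Set (Finset (Fin r))) : IsOpen (UK K) := by
  have : UK K = ⋂ τ ∈ {s : Finset (Fin r) | s ∉ K}, ⋃ i ∈ τ, {x : Fin r → ℂ | x i ≠ 0} := by
    ext x; rw [mem_UK]; simp
  rw [this]
  refine Set.Finite.isOpen_biInter (Set.toFinite _) fun τ _ => ?_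
  refine isOpen_biUnion fun i _ => ?_
  exact isOpen_ne_fun (continuous_apply i) continuous_const

open scoped unitInterval

lemma UK_pathConnected {r : ℕ} {K : Set (Finset (Fin r))} (hE : (∅ : Finset (Fin r)) ∈ K)
    (hsingle : ∀ i : Fin r, ({i} : Finset (Fin r)) ∈ K) : PathConnectedSpace ↥(UK K) := by
  refine ⟨⟨onesUK hE⟩, fun a b => ?_⟩
  obtain ⟨p, hp⟩ := exists_avoid hE hsingle (E := ℝ) (by simp) (convex_Ioo (0 : ℝ) 1)
    (fun t => (1 - t) • a.1 + t • b.1) (by fun_prop) (fun t => t * (1 - t)) (by fun_prop)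
    (fun t ht => (mul_pos ht.1 (sub_pos.2 ht.2)).ne')
  have hmem : ∀ t : I, (1 - (t : ℝ)) • a.1 + (t : ℝ) • b.1 + ((t : ℝ) * (1 - t)) • p ∈ UK K := by
    intro t
    by_cases h0 : (t : ℝ) = 0
    · simp [h0, a.2]
    by_cases h1 : (t : ℝ) = 1
    · simp [h1, b.2]
    exact hp t ⟨lt_of_le_of_ne t.2.1 (Ne.symm h0), lt_of_le_of_ne t.2.2 h1⟩
  exact ⟨⟨⟨fun t => ⟨_, hmem t⟩, by fun_prop⟩, by ext; simp, by ext; simp⟩⟩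

lemma UK_null {r : ℕ} {K : Set (Finset (Fin r))} (hE : (∅ : Finset (Fin r)) ∈ K)
    (hsingle : ∀ i : Fin r, ({i} : Finset (Fin r)) ∈ K) {n : ℕ} (hn : n ≤ 2)
    (z : ↥(UK K)) (f : C(Fin n → I, ↥(UK K))) (hf : ∀ y ∈ Cube.boundary (Fin n), f y = z) :
    f.HomotopicRel (ContinuousMap.const _ z) (Cube.boundary (Fin n)) := by
  -- a uniform thickening of the image staying in `U(K)`
  have hcomp : IsCompact (Set.range fun y => (f y).1) :=
    isCompact_range (continuous_subtype_val.comp f.continuous)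
  obtain ⟨ε, hε, hth⟩ := hcomp.exists_thickening_subset_open (isOpen_UK K)
    (by rintro _ ⟨y, rfl⟩; exact (f y).2)
  let P : (Fin n → ℝ) → (Fin n → I) := fun x i => Set.projIcc 0 1 zero_le_one (x i)
  have hP : Continuous P := continuous_pi fun i => continuous_projIcc.comp (continuous_apply i)
  let F : (Fin n → ℝ) → (Fin r → ℂ) := fun x => (f (P x)).1 - z.1
  have hF : Continuous F := by fun_prop
  obtain ⟨G, hG, hGF, hsupp⟩ := hF.exists_contDiff_approx 1 (ε := fun _ => ε)
    continuous_const (fun _ => hε)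
  let c : (Fin n → I) → (Fin n → ℝ) := fun y i => (y i : ℝ)
  have hc : Continuous c := by fun_prop
  have hPc : ∀ y, P (c y) = y := fun y => by
    funext i; exact Set.projIcc_val zero_le_one (y i)
  have hgb : ∀ y ∈ Cube.boundary (Fin n), G (c y) = 0 := by
    intro y hy
    by_contra hne
    have : F (c y) ≠ 0 := hsupp hne
    apply this
    simp [F, hPc, hf y hy]
  have hclose : ∀ y, dist (z.1 + G (c y)) (f y).1 < ε := by
    intro y
    have := hGF (c y)
    rw [dist_eq_norm] at this ⊢
    simp only [F, hPc] at this
    convert this using 2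
    abel
  have hlin : ∀ (t : I) y, (1 - (t : ℝ)) • (f y).1 + (t : ℝ) • (z.1 + G (c y)) ∈ UK K := by
    intro t y
    apply hth
    rw [Metric.mem_thickening_iff]
    refine ⟨(f y).1, ⟨y, rfl⟩, ?_⟩
    have h1 := (convex_ball (f y).1 ε) (Metric.mem_ball_self hε) (hclose y)
      (sub_nonneg.2 t.2.2) t.2.1 (by ring)
    exact h1
  have hg : ∀ y, z.1 + G (c y) ∈ UK K := fun y => by simpa using hlin 1 y
  have hGc : Continuous G := hG.continuous
  let g : C(Fin n → I, ↥(UK K)) := ⟨fun y => ⟨_, hg y⟩, by fun_prop⟩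
  have H1 : f.HomotopicRel g (Cube.boundary (Fin n)) := by
    refine ⟨⟨⟨⟨fun q => ⟨_, hlin q.1 q.2⟩, by fun_prop⟩, ?_, ?_⟩, ?_⟩⟩
    · intro y; ext; simp
    · intro y; ext; simp [g]
    · intro t y hy
      ext i
      simp [hf y hy, hgb y hy]
      ring
  let φ : (Fin n → ℝ) → ℝ := fun x => ∏ i, (x i * (1 - x i))
  have hφ : ContDiff ℝ 1 φ := by
    apply contDiff_prod
    intro i _
    fun_prop
  obtain ⟨p, hp⟩ := exists_avoid hE hsingle (E := ℝ × (Fin n → ℝ)) (by simp; omega)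
    (D := Set.Ioo (0 : ℝ) 1 ×ˢ Set.pi Set.univ fun _ => Set.Ioo (0 : ℝ) 1)
    ((convex_Ioo _ _).prod (convex_pi fun _ _ => convex_Ioo _ _))
    (fun e => (1 - e.1) • (z.1 + G e.2) + e.1 • z.1)
    (by fun_prop) (fun e => e.1 * (1 - e.1) * φ e.2) (by fun_prop)
    (by
      rintro ⟨t, x⟩ ⟨ht, hx⟩
      refine (mul_pos (mul_pos ht.1 (sub_pos.2 ht.2)) (Finset.prod_pos fun i _ => ?_)).ne'
      have := hx i trivial
      exact mul_pos this.1 (sub_pos.2 this.2))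
  have hφb : ∀ y ∈ Cube.boundary (Fin n), φ (c y) = 0 := by
    rintro y ⟨i, hi⟩
    refine Finset.prod_eq_zero (Finset.mem_univ i) ?_
    rcases hi with hi | hi <;> simp [c, hi]
  have hmem : ∀ (t : I) y, (1 - (t : ℝ)) • (z.1 + G (c y)) + (t : ℝ) • z.1
      + ((t : ℝ) * (1 - t) * φ (c y)) • p ∈ UK K := by
    intro t y
    by_cases h0 : (t : ℝ) = 0
    · simpa [h0] using hg y
    by_cases h1 : (t : ℝ) = 1
    · simp [h1, z.2]
    by_cases hy : y ∈ Cube.boundary (Fin n)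
    · rw [hφb y hy, hgb y hy, add_zero, mul_zero, zero_smul, add_zero, ← add_smul]
      simp [z.2]
    refine hp (t, c y) ⟨⟨lt_of_le_of_ne t.2.1 (Ne.symm h0), lt_of_le_of_ne t.2.2 h1⟩, ?_⟩
    intro i _
    simp only [Cube.boundary, Set.mem_setOf_eq, not_exists, not_or] at hy
    exact ⟨lt_of_le_of_ne (y i).2.1 fun h => (hy i).1 (Subtype.ext h.symm),
      lt_of_le_of_ne (y i).2.2 fun h => (hy i).2 (Subtype.ext h)⟩
  have hφc := hφ.continuous
  have H2 : g.HomotopicRel (ContinuousMap.const _ z) (Cube.boundary (Fin n)) := by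
    refine ⟨⟨⟨⟨fun q => ⟨_, hmem q.1 q.2⟩, by fun_prop⟩, ?_, ?_⟩, ?_⟩⟩
    · intro y; ext; simp [g]
    · intro y; ext; simp
    · intro t y hy
      ext i
      simp [g, hφb y hy, hgb y hy]
      ring
  exact H1.trans H2

/-- The scale: minimum over non-simplices of the maximum of coordinates, capped at `1`. -/
def scale {r : ℕ} (K : Set (Finset (Fin r))) (x : Fin r → ℂ) : NNReal :=
  Finset.univ.inf' Finset.univ_nonempty fun τ : Finset (Fin r) =>
    if τ ∈ K then 1 else min 1 (τ.sup fun i => ‖x i‖₊)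

lemma continuous_scale {r : ℕ} (K : Set (Finset (Fin r))) : Continuous (scale K) := by
  unfold scale
  refine Continuous.finset_inf'_apply _ fun τ _ => ?_
  by_cases h : τ ∈ K
  · simp only [h, if_true]; exact continuous_const
  · simp only [h, if_false]
    refine continuous_const.min (Continuous.finset_sup_apply fun i _ => ?_)
    fun_prop

lemma scale_pos {r : ℕ} {K : Set (Finset (Fin r))} {x : Fin r → ℂ} (hx : x ∈ UK K) :
    0 < scale K x := by
  unfold scale
  rw [Finset.lt_inf'_iff]
  intro τ _
  by_cases h : τ ∈ K
  · simp [h]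
  · simp only [h, if_false]
    refine lt_min one_pos ?_
    obtain ⟨i, hi, hne⟩ := mem_UK.1 hx τ h
    rw [Finset.lt_sup_iff]
    exact ⟨i, hi, by simpa using hne⟩

lemma scale_le_one {r : ℕ} (K : Set (Finset (Fin r))) (x : Fin r → ℂ) : scale K x ≤ 1 := by
  unfold scale
  refine (Finset.inf'_le _ (Finset.mem_univ ∅)).trans ?_
  split_ifs <;> simp

lemma scale_mem {r : ℕ} {K : Set (Finset (Fin r))} {x : Fin r → ℂ} (hx : x ∈ UK K) :
    (Finset.univ.filter fun i => ‖x i‖₊ < scale K x) ∈ K := by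
  by_contra h
  have h1 : scale K x ≤ (Finset.univ.filter fun i => ‖x i‖₊ < scale K x).sup
      fun i => ‖x i‖₊ := by
    conv_lhs => unfold scale
    refine (Finset.inf'_le _ (Finset.mem_univ
      (Finset.univ.filter fun i => ‖x i‖₊ < scale K x))).trans ?_
    simp only [h, if_false]
    exact min_le_right _ _
  refine absurd h1 (not_le.2 ?_)
  rw [Finset.sup_lt_iff (scale_pos hx)]
  intro i hi
  exact (Finset.mem_filter.1 hi).2

lemma scale_ZK {r : ℕ} {K : Set (Finset (Fin r))} (hdown : ∀ s ∈ K, ∀ t ⊆ s, t ∈ K)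
    {x : Fin r → ℂ} (hx : x ∈ ZK K) : scale K x = 1 := by
  refine le_antisymm (scale_le_one K x) ?_
  unfold scale
  rw [Finset.le_inf'_iff]
  intro τ _
  by_cases h : τ ∈ K
  · simp [h]
  · simp only [h, if_false]
    refine le_min le_rfl ?_
    have : ∃ i ∈ τ, 1 ≤ ‖x i‖ := by
      by_contra hc
      push Not at hc
      exact h (hdown _ hx.2 τ fun i hi => by simpa using hc i hi)
    obtain ⟨i, hi, h1⟩ := this
    exact le_trans (show (1 : NNReal) ≤ ‖x i‖₊ from h1)
      (Finset.le_sup (f := fun i => ‖x i‖₊) hi)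

lemma ZK_sub_UK {r : ℕ} {K : Set (Finset (Fin r))} (hdown : ∀ s ∈ K, ∀ t ⊆ s, t ∈ K) :
    ZK K ⊆ UK K := by
  intro x hx
  rw [mem_UK]
  intro τ hτ
  by_contra hc
  push Not at hc
  exact hτ (hdown _ hx.2 τ fun i hi => by simp [hc i hi])

/-- The scaling factors of the retraction. -/
def lam {r : ℕ} (K : Set (Finset (Fin r))) (x : Fin r → ℂ) (i : Fin r) : ℝ :=
  (max (scale K x : ℝ) ‖x i‖)⁻¹

lemma lam_pos {r : ℕ} {K : Set (Finset (Fin r))} {x : Fin r → ℂ} (hx : x ∈ UK K) (i : Fin r) :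
    0 < lam K x i :=
  inv_pos.2 (lt_max_of_lt_left (NNReal.coe_pos.2 (scale_pos hx)))

lemma continuous_lam {r : ℕ} (K : Set (Finset (Fin r))) (i : Fin r) :
    Continuous fun x : ↥(UK K) => lam K x.1 i := by
  unfold lam
  have h1 : Continuous fun x : ↥(UK K) => (scale K x.1 : ℝ) :=
    NNReal.continuous_coe.comp ((continuous_scale K).comp continuous_subtype_val)
  have h2 : Continuous fun x : ↥(UK K) => ‖x.1 i‖ :=
    ((continuous_apply i).comp continuous_subtype_val).norm
  refine Continuous.inv₀ (h1.max h2) fun x => ?_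
  exact (lt_max_of_lt_left (NNReal.coe_pos.2 (scale_pos x.2))).ne'

lemma smul_mem_UK {r : ℕ} {K : Set (Finset (Fin r))} {x : Fin r → ℂ} (hx : x ∈ UK K)
    (c : Fin r → ℝ) (hc : ∀ i, 0 < c i) : (fun i => (c i : ℂ) * x i) ∈ UK K := by
  rw [mem_UK] at hx ⊢
  intro τ hτ
  obtain ⟨i, hi, hne⟩ := hx τ hτ
  exact ⟨i, hi, mul_ne_zero (by exact_mod_cast (hc i).ne') hne⟩

lemma norm_lam {r : ℕ} {K : Set (Finset (Fin r))} {x : Fin r → ℂ} (hx : x ∈ UK K) (i : Fin r) :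
    ‖(lam K x i : ℂ) * x i‖ = ‖x i‖ / max (scale K x : ℝ) ‖x i‖ := by
  rw [norm_mul, Complex.norm_real, Real.norm_of_nonneg (lam_pos hx i).le, lam, div_eq_inv_mul]

lemma lam_mem_ZK {r : ℕ} {K : Set (Finset (Fin r))} (hdown : ∀ s ∈ K, ∀ t ⊆ s, t ∈ K)
    {x : Fin r → ℂ} (hx : x ∈ UK K) : (fun i => (lam K x i : ℂ) * x i) ∈ ZK K := by
  have hpos : ∀ i, 0 < max (scale K x : ℝ) ‖x i‖ := fun i =>
    lt_max_of_lt_left (NNReal.coe_pos.2 (scale_pos hx))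
  refine ⟨fun i => ?_, hdown _ (scale_mem hx) _ fun i hi => ?_⟩
  · rw [norm_lam hx, div_le_one (hpos i)]
    exact le_max_right _ _
  · have h := (Finset.mem_filter.1 hi).2
    rw [norm_lam hx, div_lt_one (hpos i), lt_max_iff] at h
    refine Finset.mem_filter.2 ⟨Finset.mem_univ _, ?_⟩
    rcases h with h | h
    · exact h
    · exact absurd h (lt_irrefl _)

/-- The retraction of `U(K)`. -/
def retU {r : ℕ} (K : Set (Finset (Fin r))) : C(↥(UK K), ↥(UK K)) where
  toFun x := ⟨fun i => (lam K x.1 i : ℂ) * x.1 i, smul_mem_UK x.2 _ (lam_pos x.2)⟩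
  continuous_toFun := by
    refine Continuous.subtype_mk (continuous_pi fun i => ?_) _
    exact (Complex.continuous_ofReal.comp (continuous_lam K i)).mul
      ((continuous_apply i).comp continuous_subtype_val)

lemma retU_fix {r : ℕ} {K : Set (Finset (Fin r))} (hdown : ∀ s ∈ K, ∀ t ⊆ s, t ∈ K)
    (x : ↥(UK K)) (hx : x.1 ∈ ZK K) : retU K x = x := by
  apply Subtype.ext
  funext i
  simp [retU, lam, scale_ZK hdown hx, max_eq_left (hx.1 i)]

lemma retU_homotopic {r : ℕ} (K : Set (Finset (Fin r))) :
    (retU K).Homotopic (ContinuousMap.id _) := by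
  have hpos : ∀ (q : I × ↥(UK K)) (i : Fin r), 0 < (1 - (q.1 : ℝ)) * lam K q.2.1 i + q.1 := by
    intro q i
    have h1 := lam_pos q.2.2 i
    rcases eq_or_lt_of_le q.1.2.1 with h | h
    · rw [← h]; simpa using h1
    · exact add_pos_of_nonneg_of_pos (mul_nonneg (sub_nonneg.2 q.1.2.2) h1.le) h
  refine ⟨⟨⟨fun q => ⟨_, smul_mem_UK q.2.2 _ (hpos q)⟩, ?_⟩, ?_, ?_⟩⟩
  · refine Continuous.subtype_mk (continuous_pi fun i => ?_) _
    have : Continuous fun q : I × ↥(UK K) => lam K q.2.1 i :=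
      (continuous_lam K i).comp continuous_snd
    have h2 : Continuous fun q : I × ↥(UK K) => (q.1 : ℝ) := by fun_prop
    have h3 : Continuous fun q : I × ↥(UK K) => q.2.1 i :=
      (continuous_apply i).comp (continuous_subtype_val.comp continuous_snd)
    exact (Complex.continuous_ofReal.comp (((continuous_const.sub h2).mul this).add h2)).mul h3
  · intro x; ext i; simp [retU]
  · intro x; ext i; simp

lemma scale_equiv {r : ℕ} (K : Set (Finset (Fin r))) (u x : Fin r → ℂ) (hu : ∀ i, ‖u i‖ = 1) :
    scale K (fun i => u i * x i) = scale K x := by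
  have hu' : ∀ i, ‖u i‖₊ = 1 := fun i => NNReal.eq (hu i)
  simp [scale, nnnorm_mul, hu']

lemma lam_equiv {r : ℕ} (K : Set (Finset (Fin r))) (u x : Fin r → ℂ) (hu : ∀ i, ‖u i‖ = 1)
    (i : Fin r) : lam K (fun i => u i * x i) i = lam K x i := by
  simp [lam, scale_equiv K u x hu, hu i]

/-- The retraction `U(K) → Z_K`. -/
def retZ {r : ℕ} {K : Set (Finset (Fin r))} (hdown : ∀ s ∈ K, ∀ t ⊆ s, t ∈ K) :
    C(↥(UK K), ↥(ZK K)) where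
  toFun x := ⟨(retU K x).1, lam_mem_ZK hdown x.2⟩
  continuous_toFun := (continuous_subtype_val.comp (retU K).continuous).subtype_mk _

/-- The inclusion `Z_K → U(K)`. -/
def incl {r : ℕ} {K : Set (Finset (Fin r))} (hdown : ∀ s ∈ K, ∀ t ⊆ s, t ∈ K) :
    C(↥(ZK K), ↥(UK K)) where
  toFun x := ⟨x.1, ZK_sub_UK hdown x.2⟩
  continuous_toFun := by fun_prop

lemma retZ_incl {r : ℕ} {K : Set (Finset (Fin r))} (hdown : ∀ s ∈ K, ∀ t ⊆ s, t ∈ K)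
    (x : ↥(ZK K)) : retZ hdown (incl hdown x) = x := by
  apply Subtype.ext
  have h := congrArg Subtype.val (retU_fix hdown (incl hdown x) x.2)
  exact h

lemma ZK_null {r : ℕ} {K : Set (Finset (Fin r))} (hdown : ∀ s ∈ K, ∀ t ⊆ s, t ∈ K)
    (hE : (∅ : Finset (Fin r)) ∈ K)
    (hsingle : ∀ i : Fin r, ({i} : Finset (Fin r)) ∈ K) {n : ℕ} (hn : n ≤ 2)
    (z : ↥(ZK K)) (f : C(Fin n → I, ↥(ZK K))) (hf : ∀ y ∈ Cube.boundary (Fin n), f y = z) :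
    f.HomotopicRel (ContinuousMap.const _ z) (Cube.boundary (Fin n)) := by
  have h := UK_null hE hsingle hn (incl hdown z) ((incl hdown).comp f)
    (fun y hy => by simp [hf y hy])
  have h2 := h.comp_continuousMap (retZ hdown)
  have e1 : (retZ hdown).comp ((incl hdown).comp f) = f := by
    ext1 y; exact retZ_incl hdown (f y)
  have e2 : (retZ hdown).comp (ContinuousMap.const (Fin n → I) (incl hdown z))
      = ContinuousMap.const _ z := by
    ext1 y; exact retZ_incl hdown z
  rwa [e1, e2] at h2

lemma ZK_pathConnected {r : ℕ} {K : Set (Finset (Fin r))} (hdown : ∀ s ∈ K, ∀ t ⊆ s, t ∈ K)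
    (hE : (∅ : Finset (Fin r)) ∈ K)
    (hsingle : ∀ i : Fin r, ({i} : Finset (Fin r)) ∈ K) : PathConnectedSpace ↥(ZK K) := by
  have := UK_pathConnected hE hsingle
  exact Function.Surjective.pathConnectedSpace
    (f := retZ hdown) (fun x => ⟨incl hdown x, retZ_incl hdown x⟩) (retZ hdown).continuous

lemma ZK_simplyConnected {r : ℕ} {K : Set (Finset (Fin r))}
    (hdown : ∀ s ∈ K, ∀ t ⊆ s, t ∈ K) (hE : (∅ : Finset (Fin r)) ∈ K)
    (hsingle : ∀ i : Fin r, ({i} : Finset (Fin r)) ∈ K) : SimplyConnectedSpace ↥(ZK K) := by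
  rw [simply_connected_iff_loops_nullhomotopic]
  refine ⟨ZK_pathConnected hdown hE hsingle, fun z γ => ?_⟩
  obtain ⟨H⟩ := ZK_null hdown hE hsingle (n := 1) (by norm_num) z
    ⟨fun y => γ (y 0), by fun_prop⟩ (by
      rintro y ⟨i, hi⟩
      rw [Subsingleton.elim i 0] at hi
      rcases hi with hi | hi <;> simp [hi])
  refine ⟨⟨⟨⟨fun q => H (q.1, fun _ => q.2), by fun_prop⟩, ?_, ?_⟩, ?_⟩⟩
  · intro t; simp
  · intro t; simp
  · intro t s hs
    refine (H.eq_fst t (x := fun _ => s) ⟨0, ?_⟩).trans ?_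
    · simpa using hs
    · simp

/-- For a simplicial complex `K` on `[r]` containing all singletons:
(i) the moment-angle complex `Z_K` is 2-connected; (ii) `Z_K ⊆ U(K)` and there is a
`𝕋^r`-equivariant deformation retraction of `U(K)` onto `Z_K`. -/
theorem momentAngle_two_connected_and_retract
    {r : ℕ} (K : Set (Finset (Fin r)))
    (hdown : ∀ s ∈ K, ∀ t ⊆ s, t ∈ K) (hE : (∅ : Finset (Fin r)) ∈ K)
    (hsingle : ∀ i : Fin r, ({i} : Finset (Fin r)) ∈ K) :
    (PathConnectedSpace ↥(ZK K) ∧ SimplyConnectedSpace ↥(ZK K) ∧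
      ∀ z : ↥(ZK K), Subsingleton (HomotopyGroup (Fin 2) ↥(ZK K) z)) ∧
    ZK K ⊆ UK K ∧
    ∃ ret : C(↥(UK K), ↥(UK K)),
      (∀ x, (ret x).1 ∈ ZK K) ∧
      (∀ x : ↥(UK K), x.1 ∈ ZK K → ret x = x) ∧
      ret.Homotopic (ContinuousMap.id _) ∧
      (∀ u : Fin r → ℂ, (∀ i, ‖u i‖ = 1) →
        ∀ (x : ↥(UK K)) (hm : (fun i => u i * x.1 i) ∈ UK K),
          (ret ⟨fun i => u i * x.1 i, hm⟩).1 = fun i => u i * (ret x).1 i) := by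
  refine ⟨⟨ZK_pathConnected hdown hE hsingle, ZK_simplyConnected hdown hE hsingle, fun z => ?_⟩,
    ZK_sub_UK hdown, retU K, fun x => lam_mem_ZK hdown x.2, retU_fix hdown, retU_homotopic K, ?_⟩
  · have key : ∀ a : HomotopyGroup (Fin 2) ↥(ZK K) z, a = Quotient.mk _ GenLoop.const := by
      intro a
      induction a using Quotient.inductionOn with
      | _ f => exact Quotient.sound (ZK_null hdown hE hsingle le_rfl z f.1 f.2)
    exact ⟨fun a b => (key a).trans (key b).symm⟩
  · intro u hu x hm
    funext i
    simp only [retU, ContinuousMap.coe_mk, lam_equiv K u x.1 hu]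
    ring

end Toric
end
end
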